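/- arXiv:2308.03214 — 3 statements merged into one kernel-verified Lean document; each statement's English description precedes it below -/
import Mathlib

section
/- Suppose additionally that there is a subset B of M that is R-linearly independent and spans N (so N is free as an R-module with basis B), together with subsets B_i ⊆ B such that N_i is the R-span of B_i for each 1 ≤ i ≤ w. Then the Mayer–Vietoris complex is acyclic: d_0 : M → M/N is surjective, ker d_0 = range d_1, and ker d_p = range d_{p+1} for every 1 ≤ p ≤ w (where d_{w+1} := 0). -/
open DirectSum

section MayerVietoris

variable {R : Type*} [Ring R] {M : Type*} [AddCommGroup M] [Module R M]

/-- `N_S := ⋂_{i ∈ S} N_i` (with `N_∅ = M`, i.e. the top submodule). -/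
abbrev MVsummand {w : ℕ} (N : Fin w → Submodule R M) (S : Finset (Fin w)) :
    Submodule R M := ⨅ i ∈ S, N i

/-- The degree-`p` term `C_p = ⨁_{|S| = p} N_S` of the Mayer–Vietoris complex
(for `0 ≤ p`; the term `C₋₁ = M ⧸ N` is treated separately). -/
abbrev MVC {w : ℕ} (N : Fin w → Submodule R M) (p : ℕ) : Type _ :=
  ⨁ (S : {S : Finset (Fin w) // S.card = p}), ↥(MVsummand N S.1)

/-- The inclusion `ι : N_S → N_T` for `T ⊆ S`. -/
def MVincl {w : ℕ} (N : Fin w → Submodule R M) {S T : Finset (Fin w)} (h : T ⊆ S) :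
    ↥(MVsummand N S) →ₗ[R] ↥(MVsummand N T) :=
  Submodule.inclusion (le_iInf₂ fun i hi => iInf₂_le i (h hi))

/-- The differential `d_{p+1} : C_{p+1} → C_p`, given on the summand `N_S` by
`x ↦ Σ_{j ∈ S} (−1)^{#(S,j)} ι_{(S,j)}(x)`, where `#(S,j) = |{i ∈ S : i < j}|`. -/
noncomputable def MVd {w : ℕ} (N : Fin w → Submodule R M) (p : ℕ) :
    MVC N (p + 1) →ₗ[R] MVC N p :=
  DirectSum.toModule R _ _ fun S =>
    ∑ j ∈ S.1.attach,
      ((-1 : ℤ) ^ (S.1.filter (· < j.1)).card) •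
        ((DirectSum.lof R {T : Finset (Fin w) // T.card = p}
            (fun T => ↥(MVsummand N T.1))
            ⟨S.1.erase j.1, by simp [Finset.card_erase_of_mem j.2, S.2]⟩).comp
          (MVincl N (Finset.erase_subset _ _)))

/-- The differential `d_0 : C_0 = M → M ⧸ N` (where `N = N₁ + ⋯ + N_w`),
the quotient map. -/
noncomputable def MVd0 {w : ℕ} (N : Fin w → Submodule R M) :
    MVC N 0 →ₗ[R] M ⧸ (⨆ i, N i) :=
  DirectSum.toModule R _ _ fun S =>
    (Submodule.mkQ (⨆ i, N i)).comp (MVsummand N S.1).subtype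

/-!
An element of `C_p` is a family of elements of `M` indexed by all `S ⊆ {1, …, w}`, that is, an
element of `M ⊗ Λ(ℤ^w)`, supported in degree `p`. There `d` is the sum of the contractions against
the dual basis vectors `e_j^*`, so `d² = 0` because contractions anticommute.

If `N` is a sum of independent pieces and each `N_i` is a sum of some of them, assign every piece to
one `N_i` containing it, and let `π_i` project onto the pieces assigned to `i`. Since contraction
against `e_j^*` and exterior multiplication by `e_i` anticommute up to `δ_ij`, the map
`h := ∑ i, e_i ∧ π_i` satisfies `d h + h d = ∑ i, π_i = 1` on families with values in `N`. As `π_i`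
has image in `N_i` and preserves every `N_k`, the map `h` sends `C_p` to `C_{p+1}`.
-/

section Preliminaries

theorem sum_mul_sum_self_eq_zero {ι A : Type*} [NonUnitalNonAssocSemiring A] (s : Finset ι)
    {a : ι → A} (hsq : ∀ i, a i * a i = 0) (hanti : ∀ i j, a i * a j + a j * a i = 0) :
    (∑ i ∈ s, a i) * ∑ i ∈ s, a i = 0 := by
  classical
  induction s using Finset.induction_on with
  | empty => simp only [Finset.sum_empty, mul_zero]
  | insert i s hi ih =>
    have hcross : a i * ∑ j ∈ s, a j + (∑ j ∈ s, a j) * a i = 0 := by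
      rw [Finset.mul_sum, Finset.sum_mul, ← Finset.sum_add_distrib]
      exact Finset.sum_eq_zero fun j _ => hanti i j
    rw [Finset.sum_insert hi, add_mul, mul_add, mul_add, hsq, ih, zero_add, add_zero, hcross]

theorem biSup_eq_iSup_subtype_of_subset {α κ : Type*} [CompleteLattice α] {s t : Set κ}
    (h : s ⊆ t) (f : κ → α) : ⨆ k ∈ s, f k = ⨆ k : t, ⨆ _ : (k : κ) ∈ s, f k :=
  le_antisymm (iSup₂_le fun k hk => le_iSup₂_of_le (⟨k, h hk⟩ : t) hk le_rfl)
    (iSup₂_le fun k hk => le_iSup₂_of_le (k : κ) hk le_rfl)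

end Preliminaries

section Koszul

variable {ι A A' : Type*} [LinearOrder ι] [AddCommGroup A] [Module R A] [AddCommGroup A']
  [Module R A']

/-- The sign `(-1)^{#(S,j)}`, where `#(S,j)` is the number of elements of `S` below `j`. It is the
sign with which `j` is inserted into, or removed from, the increasing list of elements of `S`. -/
def koszulSign (S : Finset ι) (j : ι) : ℤ :=
  (-1) ^ (S.filter (· < j)).card

theorem koszulSign_mul_self (S : Finset ι) (j : ι) : koszulSign S j * koszulSign S j = 1 := by
  rw [koszulSign, ← mul_pow, neg_one_mul, neg_neg, one_pow]

theorem koszulSign_insert_of_not_lt (S : Finset ι) {i j : ι} (h : ¬i < j) :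
    koszulSign (insert i S) j = koszulSign S j := by
  rw [koszulSign, Finset.filter_insert, if_neg h, koszulSign]

theorem koszulSign_insert_of_lt {S : Finset ι} {i j : ι} (hi : i ∉ S) (h : i < j) :
    koszulSign (insert i S) j = -koszulSign S j := by
  rw [koszulSign, Finset.filter_insert, if_pos h,
    Finset.card_insert_of_notMem fun hmem => hi (Finset.mem_of_mem_filter i hmem), pow_succ,
    mul_neg_one, koszulSign]

theorem koszulSign_mul_koszulSign_insert {S : Finset ι} {i j : ι} (hi : i ∉ S) (hj : j ∉ S)
    (hij : i ≠ j) :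
    koszulSign S i * koszulSign (insert i S) j = -(koszulSign S j * koszulSign (insert j S) i) := by
  rcases hij.lt_or_gt with h | h
  · rw [koszulSign_insert_of_lt hi h, koszulSign_insert_of_not_lt S h.not_gt]
    ring
  · rw [koszulSign_insert_of_lt hj h, koszulSign_insert_of_not_lt S h.not_gt]
    ring

theorem koszulSign_insert_mul_koszulSign_insert {S : Finset ι} {i j : ι} (hi : i ∉ S) (hj : j ∉ S)
    (hij : i ≠ j) :
    koszulSign (insert i S) j * koszulSign (insert j S) i = -(koszulSign S i * koszulSign S j) := by
  rcases hij.lt_or_gt with h | h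
  · rw [koszulSign_insert_of_lt hi h, koszulSign_insert_of_not_lt S h.not_gt]
    ring
  · rw [koszulSign_insert_of_lt hj h, koszulSign_insert_of_not_lt S h.not_gt]
    ring

variable (R) in
/-- Contraction against the dual basis vector `e_j^*` on `A ⊗ Λ(ℤ^ι)`, an element of which is
encoded by the family of its coefficients at the monomials `e_S`. -/
def contractAt (j : ι) : (Finset ι → A) →ₗ[R] Finset ι → A where
  toFun f T := if j ∈ T then 0 else koszulSign T j • f (insert j T)
  map_add' f g := by
    ext T
    simp only [Pi.add_apply, smul_add]
    split_ifs <;> simp only [add_zero]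
  map_smul' r f := by
    ext T
    simp only [Pi.smul_apply, smul_comm _ r, RingHom.id_apply]
    split_ifs <;> simp only [smul_zero]

variable (R) in
/-- Left exterior multiplication by the basis vector `e_i` on `A ⊗ Λ(ℤ^ι)`, with the same encoding
by coefficients as in `contractAt`. -/
def wedgeAt (i : ι) : (Finset ι → A) →ₗ[R] Finset ι → A where
  toFun f U := if i ∈ U then koszulSign U i • f (U.erase i) else 0
  map_add' f g := by
    ext U
    simp only [Pi.add_apply, smul_add]
    split_ifs <;> simp only [add_zero]
  map_smul' r f := by
    ext U
    simp only [Pi.smul_apply, smul_comm _ r, RingHom.id_apply]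
    split_ifs <;> simp only [smul_zero]

theorem contractAt_apply (j : ι) (f : Finset ι → A) (T : Finset ι) :
    contractAt R j f T = if j ∈ T then 0 else koszulSign T j • f (insert j T) :=
  rfl

theorem wedgeAt_apply (i : ι) (f : Finset ι → A) (U : Finset ι) :
    wedgeAt R i f U = if i ∈ U then koszulSign U i • f (U.erase i) else 0 :=
  rfl

theorem contractAt_single_of_mem {S : Finset ι} {j : ι} (hj : j ∈ S) (a : A) :
    contractAt R j (Pi.single S a) = Pi.single (S.erase j) (koszulSign S j • a) := by
  ext T
  obtain ⟨S, hjS, rfl⟩ : ∃ U, j ∉ U ∧ insert j U = S :=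
    ⟨S.erase j, Finset.notMem_erase j S, Finset.insert_erase hj⟩
  rw [contractAt_apply, Finset.erase_insert hjS, koszulSign_insert_of_not_lt S (lt_irrefl j)]
  by_cases hjT : j ∈ T
  · rw [if_pos hjT, Pi.single_eq_of_ne fun h : T = S => hjS (h ▸ hjT)]
  · rw [if_neg hjT]
    rcases eq_or_ne T S with rfl | hTS
    · rw [Pi.single_eq_same, Pi.single_eq_same]
    · have hne : insert j T ≠ insert j S := fun h => hTS <| by
        rw [← Finset.erase_insert hjT, h, Finset.erase_insert hjS]
      rw [Pi.single_eq_of_ne hne, Pi.single_eq_of_ne hTS, smul_zero]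

theorem contractAt_single_of_notMem {S : Finset ι} {j : ι} (hj : j ∉ S) (a : A) :
    contractAt R j (Pi.single S a) = 0 := by
  ext T
  have hne : insert j T ≠ S := fun h => hj (h ▸ Finset.mem_insert_self j T)
  rw [contractAt_apply, Pi.single_eq_of_ne hne, smul_zero, ite_self, Pi.zero_apply]

theorem contractAt_compLeft (φ : A →ₗ[R] A') (j : ι) (f : Finset ι → A) :
    contractAt R j (φ.compLeft (Finset ι) f) = φ.compLeft (Finset ι) (contractAt R j f) := by
  ext T
  simp only [contractAt_apply, LinearMap.compLeft_apply, Function.comp_apply, apply_ite φ, map_zero,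
    map_zsmul]

theorem contractAt_mul_self (j : ι) :
    (contractAt R j * contractAt R j : Module.End R (Finset ι → A)) = 0 := by
  ext f T
  simp only [Module.End.mul_apply, contractAt_apply, Finset.mem_insert_self, if_true, smul_zero,
    ite_self, LinearMap.zero_apply, Pi.zero_apply]

theorem contractAt_mul_add_mul (i j : ι) :
    (contractAt R i * contractAt R j + contractAt R j * contractAt R i :
      Module.End R (Finset ι → A)) = 0 := by
  rcases eq_or_ne i j with rfl | hij
  · rw [contractAt_mul_self, add_zero]
  ext f T
  by_cases hi : i ∈ T
  · simp [contractAt_apply, hi]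
  by_cases hj : j ∈ T
  · simp [contractAt_apply, hj]
  simp [contractAt_apply, hi, hj, hij, hij.symm, smul_smul, Finset.insert_comm j i,
    koszulSign_mul_koszulSign_insert hi hj hij]

theorem contractAt_mul_wedgeAt_self (i : ι) :
    (contractAt R i * wedgeAt R i + wedgeAt R i * contractAt R i :
      Module.End R (Finset ι → A)) = 1 := by
  ext f T
  by_cases hi : i ∈ T
  · obtain ⟨T, hiT, rfl⟩ : ∃ U, i ∉ U ∧ insert i U = T :=
      ⟨T.erase i, Finset.notMem_erase i T, Finset.insert_erase hi⟩
    simp [contractAt_apply, wedgeAt_apply, hiT, smul_smul, koszulSign_mul_self,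
      koszulSign_insert_of_not_lt T (lt_irrefl i)]
  · simp [contractAt_apply, wedgeAt_apply, hi, smul_smul, koszulSign_mul_self,
      koszulSign_insert_of_not_lt T (lt_irrefl i)]

theorem contractAt_mul_wedgeAt_of_ne {i j : ι} (hij : i ≠ j) :
    (contractAt R j * wedgeAt R i + wedgeAt R i * contractAt R j :
      Module.End R (Finset ι → A)) = 0 := by
  ext f T
  by_cases hi : i ∈ T
  swap
  · simp [contractAt_apply, wedgeAt_apply, hi, hij]
  by_cases hj : j ∈ T
  · simp [contractAt_apply, wedgeAt_apply, hj, hij.symm]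
  obtain ⟨T, hiT, rfl⟩ : ∃ U, i ∉ U ∧ insert i U = T :=
    ⟨T.erase i, Finset.notMem_erase i T, Finset.insert_erase hi⟩
  have hjT : j ∉ T := fun h => hj (Finset.mem_insert_of_mem h)
  have hijT : i ∉ insert j T := by simp only [Finset.mem_insert, hij, hiT, or_self, not_false_iff]
  simp [contractAt_apply, wedgeAt_apply, hiT, hjT, hij.symm, smul_smul,
    Finset.erase_eq_of_notMem hijT, koszulSign_insert_of_not_lt T (lt_irrefl i),
    Finset.insert_comm j i, koszulSign_insert_of_not_lt (insert j T) (lt_irrefl i),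
    koszulSign_insert_mul_koszulSign_insert hiT hjT hij]

variable [Fintype ι]

variable (R) in
/-- Contraction against `∑ j, e_j^*`; the differentials of the Mayer–Vietoris complex are its
restrictions. -/
def koszulBoundary : (Finset ι → A) →ₗ[R] Finset ι → A :=
  ∑ j, contractAt R j

/-- The map `∑ i, e_i ∧ π_i`, a homotopy for `koszulBoundary` when `∑ i, π_i = 1`. -/
def koszulHomotopy (π : ι → Module.End R A) : (Finset ι → A) →ₗ[R] Finset ι → A :=
  ∑ i, wedgeAt R i ∘ₗ (π i).compLeft (Finset ι)

theorem koszulBoundary_apply (f : Finset ι → A) :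
    koszulBoundary R f = ∑ j, contractAt R j f :=
  LinearMap.sum_apply ..

theorem koszulHomotopy_apply (π : ι → Module.End R A) (f : Finset ι → A) (U : Finset ι) :
    koszulHomotopy π f U = ∑ i ∈ U, koszulSign U i • π i (f (U.erase i)) := by
  simp only [koszulHomotopy, LinearMap.sum_apply, LinearMap.comp_apply, Finset.sum_apply,
    wedgeAt_apply, LinearMap.compLeft_apply, Function.comp_apply, Finset.sum_ite_mem,
    Finset.univ_inter]

theorem koszulBoundary_single (S : Finset ι) (a : A) :
    koszulBoundary R (Pi.single S a) = ∑ j ∈ S, Pi.single (S.erase j) (koszulSign S j • a) := by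
  rw [koszulBoundary_apply, ← Finset.sum_subset (Finset.subset_univ S) fun j _ hj =>
    contractAt_single_of_notMem hj a]
  exact Finset.sum_congr rfl fun j hj => contractAt_single_of_mem hj a

theorem koszulBoundary_compLeft (φ : A →ₗ[R] A') (f : Finset ι → A) :
    koszulBoundary R (φ.compLeft (Finset ι) f) = φ.compLeft (Finset ι) (koszulBoundary R f) := by
  simp only [koszulBoundary_apply, contractAt_compLeft, map_sum]

theorem koszulBoundary_koszulBoundary (f : Finset ι → A) :
    koszulBoundary R (koszulBoundary R f) = 0 :=
  LinearMap.congr_fun (sum_mul_sum_self_eq_zero (A := Module.End R (Finset ι → A)) Finset.univ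
    contractAt_mul_self contractAt_mul_add_mul) f

theorem sum_contractAt_wedgeAt_add (i : ι) (f : Finset ι → A) :
    ∑ j, (contractAt R j (wedgeAt R i f) + wedgeAt R i (contractAt R j f)) = f := by
  refine (Fintype.sum_eq_single i fun j hj =>
    LinearMap.congr_fun (contractAt_mul_wedgeAt_of_ne hj.symm) f).trans ?_
  exact LinearMap.congr_fun (contractAt_mul_wedgeAt_self i) f

theorem koszulBoundary_koszulHomotopy_add {π : ι → Module.End R A} (hπ : ∑ i, π i = 1)
    (f : Finset ι → A) :
    koszulBoundary R (koszulHomotopy π f) + koszulHomotopy π (koszulBoundary R f) = f := by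
  let P (i : ι) := (π i).compLeft (Finset ι)
  calc koszulBoundary R (koszulHomotopy π f) + koszulHomotopy π (koszulBoundary R f)
      = ∑ i, ∑ j, (contractAt R j (wedgeAt R i (P i f)) +
          wedgeAt R i (contractAt R j (P i f))) := by
        simp only [koszulHomotopy, koszulBoundary_apply, LinearMap.sum_apply, LinearMap.comp_apply,
          map_sum, P, contractAt_compLeft, Finset.sum_add_distrib]
        rw [Finset.sum_comm]
        congr 1
        exact Finset.sum_comm
    _ = ∑ i, P i f := Finset.sum_congr rfl fun i _ => sum_contractAt_wedgeAt_add i (P i f)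
    _ = f := by
        ext S
        rw [Finset.sum_apply, ← Module.End.one_apply (R := R) (f S), ← hπ, LinearMap.sum_apply]
        rfl

end Koszul

section SubordinatePartition

variable {ι κ : Type*} [Fintype ι]

/-- A linear partition of unity on `⨆ i, N i` subordinate to `N` and compatible with every `N k`:
the identity is the sum of endomorphisms `π i` with image in `N i` that map each `N k` to itself. -/
structure IsSubordinatePartition (N : ι → Submodule R M)
    (π : ι → Module.End R ↥(⨆ i, N i)) : Prop where
  sum_eq_one : ∑ i, π i = 1
  apply_mem : ∀ i (x : ↥(⨆ i, N i)), (π i x : M) ∈ N i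
  apply_mem_of_mem : ∀ i k (x : ↥(⨆ i, N i)), (x : M) ∈ N k → (π i x : M) ∈ N k

theorem IsSubordinatePartition.koszulHomotopy_mem [LinearOrder ι] {N : ι → Submodule R M}
    {π : ι → Module.End R ↥(⨆ i, N i)} (hπ : IsSubordinatePartition N π)
    {f : Finset ι → ↥(⨆ i, N i)} (hf : ∀ S, ∀ k ∈ S, (f S : M) ∈ N k) (U : Finset ι) {k : ι}
    (hk : k ∈ U) : (koszulHomotopy π f U : M) ∈ N k := by
  rw [koszulHomotopy_apply, Submodule.coe_sum]
  refine sum_mem fun i _ => zsmul_mem (?_ : (π i (f (U.erase i)) : M) ∈ N k) _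
  rcases eq_or_ne k i with rfl | hki
  · exact hπ.apply_mem k _
  · exact hπ.apply_mem_of_mem i k _ (hf _ k (Finset.mem_erase.2 ⟨hki, hk⟩))

theorem exists_isSubordinatePartition_of_choice {V : κ → Submodule R M} (hV : iSupIndep V)
    {K : ι → Set κ} {N : ι → Submodule R M} (hN : ∀ i, N i = ⨆ k ∈ K i, V k)
    {c : κ → ι} (hc : ∀ k, k ∈ K (c k)) : ∃ π, IsSubordinatePartition N π := by
  classical
  let L : (Π₀ k, V k) →ₗ[R] M := DFinsupp.lsum ℕ fun k => (V k).subtype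
  have mem_N_iff (i : ι) (x : M) : x ∈ N i ↔ ∃ v : Π₀ k, V k, L (v.filter (· ∈ K i)) = x := by
    rw [hN, Submodule.mem_biSup_iff_exists_dfinsupp]
  have range_L : LinearMap.range L = ⨆ i, N i := by
    rw [← Submodule.iSup_eq_range_dfinsupp_lsum]
    refine le_antisymm (iSup_le fun k => le_iSup_of_le (c k) ?_) (iSup_le fun i => ?_)
    · exact hN (c k) ▸ le_iSup₂_of_le k (hc k) le_rfl
    · exact hN i ▸ iSup₂_le fun k _ => le_iSup V k
  let e : (Π₀ k, V k) ≃ₗ[R] ↥(⨆ i, N i) :=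
    (LinearEquiv.ofInjective L hV.dfinsupp_lsum_injective).trans (LinearEquiv.ofEq _ _ range_L)
  have coe_e (v) : (e v : M) = L v := rfl
  refine ⟨fun i => e.conjRingEquiv (DFinsupp.filterLinearMap R _ (c · = i)), ?_, ?_, ?_⟩
  · rw [← map_sum, ← map_one e.conjRingEquiv]
    congr 1
    refine LinearMap.ext fun v => DFinsupp.ext fun k => ?_
    simp [DFinsupp.filter_apply]
  · intro i x
    refine (mem_N_iff i _).2 ⟨(e.symm x).filter (c · = i), congrArg L (DFinsupp.ext fun k => ?_)⟩
    simp only [DFinsupp.filter_apply, DFinsupp.filterLinearMap_apply]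
    split_ifs with hK hck hck
    · rfl
    · rfl
    · exact (hK (hck ▸ hc k)).elim
    · rfl
  · intro i k x hx
    obtain ⟨v, hv⟩ := (mem_N_iff k _).1 hx
    obtain rfl : e (v.filter (· ∈ K k)) = x := Subtype.ext hv
    refine (mem_N_iff k _).2 ⟨v.filter (c · = i), ?_⟩
    rw [LinearEquiv.conjRingEquiv_apply_apply, LinearEquiv.symm_apply_apply, coe_e,
      DFinsupp.filterLinearMap_apply]
    refine congrArg L (DFinsupp.ext fun l => ?_)
    simp only [DFinsupp.filter_apply, ← ite_and, and_comm]

theorem exists_isSubordinatePartition {V : κ → Submodule R M} (hV : iSupIndep V)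
    {K : ι → Set κ} {N : ι → Submodule R M} (hN : ∀ i, N i = ⨆ k ∈ K i, V k) :
    ∃ π, IsSubordinatePartition N π := by
  choose c hc using fun k : ⋃ i, K i => Set.mem_iUnion.1 k.2
  exact exists_isSubordinatePartition_of_choice (hV.comp Subtype.val_injective)
    (K := fun i => Subtype.val ⁻¹' K i)
    (fun i => (hN i).trans (biSup_eq_iSup_subtype_of_subset (Set.subset_iUnion K i) V)) hc

end SubordinatePartition

section Complex

variable {w : ℕ} (N : Fin w → Submodule R M) (p : ℕ)

/-- The inclusion of `C_p` into the families of elements of `M` indexed by all subsets, extending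
by zero to subsets of cardinality other than `p`. -/
noncomputable def MVtoFamily : MVC N p →ₗ[R] Finset (Fin w) → M :=
  DirectSum.toModule R _ _ fun S =>
    LinearMap.single R (fun _ => M) S.1 ∘ₗ (MVsummand N S.1).subtype

theorem MVtoFamily_lof (S : {S : Finset (Fin w) // S.card = p}) (m : MVsummand N S.1) :
    MVtoFamily N p (DirectSum.lof R _ (fun T : {T : Finset (Fin w) // T.card = p} =>
      ↥(MVsummand N T.1)) S m) = Pi.single S.1 (m : M) := by
  rw [MVtoFamily, DirectSum.toModule_lof]
  rfl

theorem MVtoFamily_apply (x : MVC N p) (S : Finset (Fin w)) :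
    MVtoFamily N p x S = if h : S.card = p then (x ⟨S, h⟩ : M) else 0 := by
  induction x using DirectSum.induction_on with
  | zero => simp
  | add x y hx hy => split_ifs at hx hy ⊢ <;> simp [hx, hy]
  | of T m =>
    rw [← DirectSum.lof_eq_of R, MVtoFamily_lof]
    obtain ⟨T, rfl⟩ := T
    rcases eq_or_ne S T with rfl | hST
    · rw [Pi.single_eq_same, dif_pos rfl, DirectSum.lof_apply]
    · have hne (h : S.card = T.card) :
          (⟨S, h⟩ : {S : Finset (Fin w) // S.card = T.card}) ≠ ⟨T, rfl⟩ :=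
        fun heq => hST (congrArg Subtype.val heq)
      rw [Pi.single_eq_of_ne hST]
      split_ifs with h
      · rw [DirectSum.lof_eq_of, DirectSum.of_eq_of_ne _ _ _ (hne h)]
        rfl
      · rfl

theorem MVtoFamily_injective : Function.Injective (MVtoFamily N p) := fun x y h =>
  DFinsupp.ext fun S => Subtype.ext <| by
    simpa only [MVtoFamily_apply, S.2, dif_pos] using congrFun h S.1

theorem mem_range_MVtoFamily {f : Finset (Fin w) → M} :
    f ∈ LinearMap.range (MVtoFamily N p) ↔
      (∀ S, f S ∈ MVsummand N S) ∧ ∀ S, S.card ≠ p → f S = 0 := by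
  constructor
  · rintro ⟨x, rfl⟩
    refine ⟨fun S => ?_, fun S hS => by rw [MVtoFamily_apply, dif_neg hS]⟩
    rw [MVtoFamily_apply]
    split_ifs with h
    · exact (x ⟨S, h⟩).2
    · exact zero_mem _
  · rintro ⟨hmem, hzero⟩
    refine ⟨(DirectSum.linearEquivFunOnFintype R _ _).symm fun S => ⟨f S.1, hmem S.1⟩, ?_⟩
    ext S
    rw [MVtoFamily_apply]
    split_ifs with h
    · rfl
    · exact (hzero S h).symm

theorem coe_MVincl {S T : Finset (Fin w)} (h : T ⊆ S) (m : MVsummand N S) :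
    (MVincl N h m : M) = m :=
  Submodule.coe_inclusion _ _

theorem MVtoFamily_MVd (x : MVC N (p + 1)) :
    MVtoFamily N p (MVd N p x) = koszulBoundary R (MVtoFamily N (p + 1) x) := by
  suffices MVtoFamily N p ∘ₗ MVd N p = koszulBoundary R ∘ₗ MVtoFamily N (p + 1) from
    LinearMap.congr_fun this x
  refine DirectSum.linearMap_ext R fun S => LinearMap.ext fun m => ?_
  simp only [LinearMap.comp_apply, MVtoFamily_lof, koszulBoundary_single]
  rw [← Finset.sum_attach, MVd, DirectSum.toModule_lof]
  simp only [LinearMap.sum_apply, LinearMap.smul_apply, LinearMap.comp_apply, map_sum, map_zsmul,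
    MVtoFamily_lof, coe_MVincl, Pi.single_zsmul, koszulSign]

theorem MVd0_apply (x : MVC N 0) :
    MVd0 N x = Submodule.Quotient.mk (MVtoFamily N 0 x ∅) := by
  suffices MVd0 N = (⨆ i, N i).mkQ ∘ₗ LinearMap.proj ∅ ∘ₗ MVtoFamily N 0 from
    LinearMap.congr_fun this x
  refine DirectSum.linearMap_ext R fun S => LinearMap.ext fun m => ?_
  obtain ⟨S, hS⟩ := S
  obtain rfl := Finset.card_eq_zero.1 hS
  simp only [LinearMap.comp_apply, MVtoFamily_lof, LinearMap.proj_apply, Pi.single_eq_same]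
  rw [MVd0, DirectSum.toModule_lof]
  rfl

theorem MVd0_surjective : Function.Surjective (MVd0 N) := by
  intro q
  obtain ⟨m, rfl⟩ := Submodule.Quotient.mk_surjective _ q
  obtain ⟨x, hx⟩ : Pi.single ∅ m ∈ LinearMap.range (MVtoFamily N 0) := by
    refine (mem_range_MVtoFamily N 0).2 ⟨fun S => ?_, fun S hS => ?_⟩
    · rcases eq_or_ne S ∅ with rfl | hS
      · simp
      · simp [hS]
    · have hne : S ≠ ∅ := fun h => hS (by rw [h, Finset.card_empty])
      exact Pi.single_eq_of_ne (M := fun _ => M) hne m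
  exact ⟨x, by rw [MVd0_apply, hx, Pi.single_eq_same]⟩

variable {N p}

theorem MVtoFamily_mem (x : MVC N p) {S : Finset (Fin w)} {k : Fin w} (hk : k ∈ S) :
    MVtoFamily N p x S ∈ N k :=
  iInf₂_le (f := fun i _ => N i) k hk (((mem_range_MVtoFamily N p).1 ⟨x, rfl⟩).1 S)

theorem MVtoFamily_eq_zero (x : MVC N p) {S : Finset (Fin w)} (hS : S.card ≠ p) :
    MVtoFamily N p x S = 0 :=
  ((mem_range_MVtoFamily N p).1 ⟨x, rfl⟩).2 S hS

theorem MVtoFamily_mem_iSup (x : MVC N p) {S : Finset (Fin w)} (hS : S.Nonempty) :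
    MVtoFamily N p x S ∈ ⨆ i, N i :=
  let ⟨_, hk⟩ := hS
  Submodule.mem_iSup_of_mem _ (MVtoFamily_mem x hk)

theorem range_MVd_zero_le_ker_MVd0 : LinearMap.range (MVd N 0) ≤ LinearMap.ker (MVd0 N) := by
  rintro _ ⟨x, rfl⟩
  rw [LinearMap.mem_ker, MVd0_apply, Submodule.Quotient.mk_eq_zero, MVtoFamily_MVd,
    koszulBoundary_apply, Finset.sum_apply]
  refine sum_mem fun j _ => ?_
  rw [contractAt_apply, if_neg (Finset.notMem_empty j)]
  exact zsmul_mem (MVtoFamily_mem_iSup x (Finset.insert_nonempty j ∅)) _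

theorem range_MVd_succ_le_ker_MVd :
    LinearMap.range (MVd N (p + 1)) ≤ LinearMap.ker (MVd N p) := by
  rintro _ ⟨x, rfl⟩
  refine MVtoFamily_injective N p ?_
  rw [MVtoFamily_MVd, MVtoFamily_MVd, koszulBoundary_koszulBoundary, map_zero]

namespace IsSubordinatePartition

variable {π : Fin w → Module.End R ↥(⨆ i, N i)}

theorem koszulHomotopy_mem_range (hπ : IsSubordinatePartition N π) {x : MVC N p}
    {f : Finset (Fin w) → ↥(⨆ i, N i)}
    (hf : (⨆ i, N i).subtype.compLeft _ f = MVtoFamily N p x) :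
    (⨆ i, N i).subtype.compLeft _ (koszulHomotopy π f) ∈
      LinearMap.range (MVtoFamily N (p + 1)) := by
  have coe_f (S) : (f S : M) = MVtoFamily N p x S := congrFun hf S
  refine (mem_range_MVtoFamily N (p + 1)).2 ⟨fun U => ?_, fun U hU => ?_⟩
  · refine (Submodule.mem_iInf _).2 fun k => (Submodule.mem_iInf _).2 fun hk => ?_
    exact hπ.koszulHomotopy_mem (fun S k hk => coe_f S ▸ MVtoFamily_mem x hk) U hk
  · have hzero : koszulHomotopy π f U = 0 := by
      rw [koszulHomotopy_apply]
      refine Finset.sum_eq_zero fun i hi => ?_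
      have hcard : (U.erase i).card ≠ p := fun h => hU (h ▸ (Finset.card_erase_add_one hi).symm)
      have hfi : f (U.erase i) = 0 := Subtype.ext ((coe_f _).trans (MVtoFamily_eq_zero x hcard))
      rw [hfi, map_zero, smul_zero]
    exact congrArg Subtype.val hzero

theorem mem_range_MVd (hπ : IsSubordinatePartition N π) {x : MVC N p}
    (hmem : ∀ S, MVtoFamily N p x S ∈ ⨆ i, N i)
    (hcycle : koszulBoundary R (MVtoFamily N p x) = 0) : x ∈ LinearMap.range (MVd N p) := by
  let incl := (⨆ i, N i).subtype.compLeft (Finset (Fin w))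
  let f : Finset (Fin w) → ↥(⨆ i, N i) := fun S => ⟨MVtoFamily N p x S, hmem S⟩
  have incl_f : incl f = MVtoFamily N p x := rfl
  have boundary_f : koszulBoundary R f = 0 := by
    have hincl : incl (koszulBoundary R f) = 0 := by
      rw [← koszulBoundary_compLeft, incl_f, hcycle]
    exact (Submodule.subtype_injective _).comp_left hincl
  obtain ⟨y, hy⟩ := hπ.koszulHomotopy_mem_range incl_f
  refine ⟨y, MVtoFamily_injective N p ?_⟩
  calc MVtoFamily N p (MVd N p y)
      = koszulBoundary R (incl (koszulHomotopy π f)) := by rw [MVtoFamily_MVd, hy]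
    _ = incl (koszulBoundary R (koszulHomotopy π f)) := koszulBoundary_compLeft ..
    _ = incl f := by
        conv_rhs => rw [← koszulBoundary_koszulHomotopy_add hπ.sum_eq_one f, boundary_f, map_zero,
          add_zero]

theorem ker_MVd0 (hπ : IsSubordinatePartition N π) :
    LinearMap.ker (MVd0 N) = LinearMap.range (MVd N 0) := by
  refine le_antisymm (fun x hx => hπ.mem_range_MVd (fun S => ?_) ?_) range_MVd_zero_le_ker_MVd0
  · rcases S.eq_empty_or_nonempty with rfl | hS
    · rwa [LinearMap.mem_ker, MVd0_apply, Submodule.Quotient.mk_eq_zero] at hx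
    · exact MVtoFamily_mem_iSup x hS
  · ext T
    rw [koszulBoundary_apply, Finset.sum_apply]
    refine Finset.sum_eq_zero fun j _ => ?_
    rw [contractAt_apply, MVtoFamily_eq_zero x (Finset.insert_nonempty j T).card_ne_zero, smul_zero,
      ite_self]

theorem ker_MVd (hπ : IsSubordinatePartition N π) (p : ℕ) :
    LinearMap.ker (MVd N p) = LinearMap.range (MVd N (p + 1)) := by
  refine le_antisymm (fun x hx => hπ.mem_range_MVd (fun S => ?_) ?_) range_MVd_succ_le_ker_MVd
  · rcases S.eq_empty_or_nonempty with rfl | hS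
    · rw [MVtoFamily_eq_zero x (by simp)]
      exact zero_mem _
    · exact MVtoFamily_mem_iSup x hS
  · rw [← MVtoFamily_MVd, LinearMap.mem_ker.1 hx, map_zero]

end IsSubordinatePartition

end Complex

theorem span_eq_iSup_span_singleton_of_subset {s t : Set M} (h : s ⊆ t) :
    Submodule.span R s = ⨆ b ∈ (Subtype.val ⁻¹' s : Set t), Submodule.span R {(b : M)} := by
  rw [Submodule.span_eq_iSup_of_singleton_spans]
  exact biSup_eq_iSup_subtype_of_subset h _

theorem stmt3_general {w : ℕ} {κ : Type*} {V : κ → Submodule R M} (hV : iSupIndep V)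
    {K : Fin w → Set κ} {N : Fin w → Submodule R M} (hN : ∀ i, N i = ⨆ k ∈ K i, V k) :
    Function.Surjective (MVd0 N) ∧
    LinearMap.ker (MVd0 N) = LinearMap.range (MVd N 0) ∧
    ∀ p : ℕ, LinearMap.ker (MVd N p) = LinearMap.range (MVd N (p + 1)) := by
  obtain ⟨π, hπ⟩ := exists_isSubordinatePartition hV hN
  exact ⟨MVd0_surjective N, hπ.ker_MVd0, hπ.ker_MVd⟩

/-- if `N = N₁ + ⋯ + N_w` is free on a basis `B ⊆ M` and each `N_i` is the
span of a subset `B_i ⊆ B`, then the Mayer–Vietoris complex is acyclic: `d_0` is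
surjective, `ker d_0 = range d_1`, and `ker d_p = range d_{p+1}` for all `p ≥ 1`
(here `MVd N p` is `d_{p+1}`, so the last conjunct, quantified over all `p : ℕ`,
covers `1 ≤ p ≤ w`; for `p > w` all modules involved are zero). -/
theorem stmt3 {w : ℕ} (hw : 1 ≤ w) (N : Fin w → Submodule R M)
    (B : Set M) (hB : LinearIndependent R (fun b : B => (b : M)))
    (hBspan : Submodule.span R B = ⨆ i, N i)
    (Bi : Fin w → Set M) (hBiB : ∀ i, Bi i ⊆ B)
    (hNi : ∀ i, N i = Submodule.span R (Bi i)) :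
    Function.Surjective (MVd0 N) ∧
    LinearMap.ker (MVd0 N) = LinearMap.range (MVd N 0) ∧
    ∀ p : ℕ, LinearMap.ker (MVd N p) = LinearMap.range (MVd N (p + 1)) :=
  stmt3_general hB.iSupIndep_span_singleton fun i =>
    (hNi i).trans (span_eq_iSup_span_singleton_of_subset (hBiB i))

end MayerVietoris
end

section
/- Let n ≥ 2 and let T ⊆ ZMod n be innermost with MS(T) = ZMod n. Then n is even, and either T = {x : ZMod n | x.val is even} or T = {x : ZMod n | x.val is odd}, where x.val ∈ {0, …, n−1} denotes the canonical representative of x. -/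
/-- The moral support `MS(T) = T ∪ (T + 1)` of a subset `T ⊆ ZMod n`. -/
def moralSupport (n : ℕ) (T : Set (ZMod n)) : Set (ZMod n) :=
  T ∪ {x | ∃ t ∈ T, x = t + 1}

/-- `T ⊆ ZMod n` is innermost: no two distinct elements `i ≠ j` of `T` satisfy
`i = j + 1`. -/
def Innermost (n : ℕ) (T : Set (ZMod n)) : Prop :=
  ∀ i ∈ T, ∀ j ∈ T, i ≠ j → i ≠ j + 1

/-- A set `T` is alternating if membership in `T` flips with each step `x ↦ x + 1`. For sets in
`ZMod n` with `n ≠ 1` this is what being innermost with full moral support amounts to, and `n` steps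
around the cycle return to `0`, so the number of flips has to be even. -/
def IsAlternating {R : Type*} [AddMonoidWithOne R] (T : Set R) : Prop :=
  ∀ x, x + 1 ∈ T ↔ x ∉ T

namespace IsAlternating

section AddMonoidWithOne

variable {R : Type*} [AddMonoidWithOne R] {T : Set R}

theorem natCast_mem_iff (hT : IsAlternating T) (k : ℕ) :
    (k : R) ∈ T ↔ (Even k ↔ (0 : R) ∈ T) := by
  induction k with
  | zero => simp
  | succ k ih =>
    rw [Nat.cast_succ, hT, ih, Nat.even_add_one]
    tauto

theorem even_of_charP (hT : IsAlternating T) (n : ℕ) [CharP R n] : Even n := by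
  have h : (0 : R) ∈ T ↔ (Even n ↔ (0 : R) ∈ T) := by
    simpa only [CharP.cast_eq_zero] using hT.natCast_mem_iff n
  tauto

end AddMonoidWithOne

variable {n : ℕ} [NeZero n] {T : Set (ZMod n)}

theorem mem_iff_even_val (hT : IsAlternating T) (x : ZMod n) :
    x ∈ T ↔ (Even x.val ↔ (0 : ZMod n) ∈ T) := by
  simpa only [ZMod.natCast_zmod_val] using hT.natCast_mem_iff x.val

theorem eq_setOf_even_val (hT : IsAlternating T) (h0 : (0 : ZMod n) ∈ T) :
    T = {x : ZMod n | Even x.val} := by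
  ext x
  simp [hT.mem_iff_even_val x, h0]

theorem eq_setOf_odd_val (hT : IsAlternating T) (h0 : (0 : ZMod n) ∉ T) :
    T = {x : ZMod n | Odd x.val} := by
  ext x
  simp [hT.mem_iff_even_val x, h0]

end IsAlternating

section

variable {n : ℕ} {T : Set (ZMod n)}

theorem add_one_mem_moralSupport_iff {x : ZMod n} :
    x + 1 ∈ moralSupport n T ↔ x + 1 ∈ T ∨ x ∈ T := by
  simp [moralSupport]

theorem Innermost.add_one_notMem (hT : Innermost n T) (hn : n ≠ 1) {x : ZMod n} (hx : x ∈ T) :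
    x + 1 ∉ T := by
  have : Nontrivial (ZMod n) := ZMod.nontrivial_iff.mpr hn
  exact fun hx' ↦ hT (x + 1) hx' x hx (add_ne_left.mpr one_ne_zero) rfl

theorem Innermost.isAlternating (hT : Innermost n T) (hn : n ≠ 1)
    (hMS : moralSupport n T = Set.univ) : IsAlternating T := by
  intro x
  have hx : x + 1 ∈ T ∨ x ∈ T := add_one_mem_moralSupport_iff.mp (hMS ▸ Set.mem_univ _)
  exact ⟨fun hx' hxT ↦ hT.add_one_notMem hn hxT hx', hx.resolve_right⟩

end

/-- if `T ⊆ ZMod n` is innermost and `MS(T) = ZMod n`, then `n` is even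
and `T` consists of exactly the elements with even canonical representative, or
exactly those with odd canonical representative. -/
theorem stmt12 (n : ℕ) (hn : 2 ≤ n) (T : Set (ZMod n)) (hT : Innermost n T)
    (hMS : moralSupport n T = Set.univ) :
    Even n ∧
      (T = {x : ZMod n | Even x.val} ∨ T = {x : ZMod n | Odd x.val}) := by
  have : NeZero n := ⟨by lia⟩
  have halt : IsAlternating T := hT.isAlternating (by lia) hMS
  refine ⟨halt.even_of_charP n, ?_⟩
  by_cases h0 : (0 : ZMod n) ∈ T
  · exact .inl (halt.eq_setOf_even_val h0)
  · exact .inr (halt.eq_setOf_odd_val h0)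
end

section
/- Let n ≥ 1 and let p be an annular link state on ZMod n having at least one part of cardinality 2. Then there exists k ∈ ZMod n such that {k, k + 1} is a part of p. -/
/-- The open cyclic interval `(a, b)` in `ZMod n`:
the set `{a + k : k ∈ ℕ, 0 < k < (b − a).val}`. -/
def cycInt (n : ℕ) (a b : ZMod n) : Set (ZMod n) :=
  {x | ∃ k : ℕ, 0 < k ∧ k < (b - a).val ∧ x = a + (k : ZMod n)}

/-- An annular link state on `ZMod n`: a partition of `ZMod n` (a collection of
pairwise disjoint nonempty subsets covering `ZMod n`) all of whose parts have
cardinality 1 or 2, such that for every part `{i, j}` of cardinality 2: no part of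
cardinality 2 has one element in `(i,j)` and one in `(j,i)`; and either every
singleton part is contained in `(i,j)` or every singleton part is contained in
`(j,i)`. -/
structure AnnularLinkState (n : ℕ) where
  parts : Set (Set (ZMod n))
  parts_nonempty : ∀ p ∈ parts, p.Nonempty
  parts_disjoint : ∀ p ∈ parts, ∀ q ∈ parts, p ≠ q → Disjoint p q
  parts_cover : ∀ x : ZMod n, ∃ p ∈ parts, x ∈ p
  parts_card : ∀ p ∈ parts, p.ncard = 1 ∨ p.ncard = 2
  noncrossing : ∀ i j : ZMod n, i ≠ j → {i, j} ∈ parts →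
    ∀ p ∈ parts, p.ncard = 2 →
      ¬ ∃ x ∈ p, ∃ y ∈ p, x ∈ cycInt n i j ∧ y ∈ cycInt n j i
  defects_one_side : ∀ i j : ZMod n, i ≠ j → {i, j} ∈ parts →
    (∀ p ∈ parts, p.ncard = 1 → p ⊆ cycInt n i j) ∨
    (∀ p ∈ parts, p.ncard = 1 → p ⊆ cycInt n j i)

/-!
An innermost arc joins neighbours. Since all defects lie on one side of any given arc, that arc
can be oriented as `(i, j)` with no defect in the open interval `(i, j)`. Among all arcs
oriented in this way choose one of minimal length. If `j ≠ i + 1`, then `i + 1` lies in `(i, j)`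
and is therefore linked to some `y`, which also lies in `(i, j)` because arcs do not cross;
since `(i + 1, y) ⊆ (i, j)`, this is a shorter arc with no defect underneath.
-/

section CyclicInterval

variable {n : ℕ} [NeZero n] {a b x y : ZMod n}

theorem mem_cycInt_iff : x ∈ cycInt n a b ↔ 0 < (x - a).val ∧ (x - a).val < (b - a).val := by
  constructor
  · rintro ⟨k, hk_pos, hk_lt, rfl⟩
    rw [add_sub_cancel_left, ZMod.val_natCast_of_lt (hk_lt.trans (ZMod.val_lt _))]
    exact ⟨hk_pos, hk_lt⟩
  · rintro ⟨h_pos, h_lt⟩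
    exact ⟨(x - a).val, h_pos, h_lt, by rw [ZMod.natCast_zmod_val, add_sub_cancel]⟩

theorem left_notMem_cycInt : a ∉ cycInt n a b := by
  simp [mem_cycInt_iff]

theorem right_notMem_cycInt : b ∉ cycInt n a b := by
  simp [mem_cycInt_iff]

theorem val_sub_of_val_sub_le (h : (x - a).val ≤ (y - a).val) :
    (y - x).val = (y - a).val - (x - a).val := by
  rw [← sub_sub_sub_cancel_right y x a, ZMod.val_sub h]

theorem val_sub_add_val_sub_swap (hab : a ≠ b) : (b - a).val + (a - b).val = n := by
  have : NeZero (b - a) := ⟨sub_ne_zero.mpr hab.symm⟩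
  rw [← neg_sub b a, ZMod.val_neg_of_ne_zero, Nat.add_sub_cancel' (ZMod.val_lt _).le]

theorem mem_cycInt_swap_iff (hab : a ≠ b) :
    x ∈ cycInt n b a ↔ (b - a).val < (x - a).val := by
  rw [mem_cycInt_iff]
  have h_swap := val_sub_add_val_sub_swap hab
  rcases le_or_gt (b - a).val (x - a).val with h_le | h_lt
  · have h_val := val_sub_of_val_sub_le h_le
    have h_bound := ZMod.val_lt (x - a)
    omega
  · have hxb : x ≠ b := by
      rintro rfl
      exact h_lt.false
    have h_val := val_sub_of_val_sub_le h_lt.le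
    have h_swap' := val_sub_add_val_sub_swap hxb
    omega

theorem disjoint_cycInt_swap : Disjoint (cycInt n a b) (cycInt n b a) := by
  rw [Set.disjoint_left]
  intro x hx hx'
  rw [mem_cycInt_iff] at hx
  have hab : a ≠ b := by
    rintro rfl
    simp at hx
  exact hx.2.not_gt ((mem_cycInt_swap_iff hab).mp hx')

theorem mem_cycInt_or_mem_cycInt_swap (hab : a ≠ b) (hxa : x ≠ a) (hxb : x ≠ b) :
    x ∈ cycInt n a b ∨ x ∈ cycInt n b a := by
  rw [mem_cycInt_swap_iff hab, mem_cycInt_iff]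
  have h_pos : 0 < (x - a).val := ZMod.val_pos.mpr (sub_ne_zero.mpr hxa)
  have h_ne : (x - a).val ≠ (b - a).val := fun h ↦
    hxb (sub_left_injective (ZMod.val_injective n h))
  exact h_ne.lt_or_gt.imp_left (⟨h_pos, ·⟩)

theorem cycInt_subset_cycInt (hy : y ∈ cycInt n a b) (hxy : (x - a).val ≤ (y - a).val) :
    cycInt n x y ⊆ cycInt n a b := by
  intro z hz
  rw [mem_cycInt_iff] at hy hz ⊢
  have h_yx := val_sub_of_val_sub_le hxy
  have h_sum : (z - a).val = (z - x).val + (x - a).val := by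
    rw [← sub_add_sub_cancel z x a]
    refine ZMod.val_add_of_lt ?_
    have h_bound := ZMod.val_lt (y - a)
    omega
  omega

theorem add_one_mem_cycInt (hab : b ≠ a) (hab' : b ≠ a + 1) : a + 1 ∈ cycInt n a b := by
  have h_zero : (b - a).val ≠ 0 := by simpa [sub_eq_zero] using hab
  have h_one : (b - a).val ≠ 1 := by
    intro h
    have h_cast := ZMod.natCast_zmod_val (b - a)
    rw [h, Nat.cast_one] at h_cast
    exact hab' (eq_add_of_sub_eq' h_cast.symm)
  exact ⟨1, one_pos, by omega, by rw [Nat.cast_one]⟩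

end CyclicInterval

namespace AnnularLinkState

variable {n : ℕ} (p : AnnularLinkState n) {i j x y : ZMod n}

theorem eq_of_mem_of_mem {q r : Set (ZMod n)} (hq : q ∈ p.parts) (hr : r ∈ p.parts)
    (hxq : x ∈ q) (hxr : x ∈ r) : q = r := by
  by_contra h
  exact Set.disjoint_left.mp (p.parts_disjoint q hq r hr h) hxq hxr

theorem exists_pair_mem_parts (hx : {x} ∉ p.parts) : ∃ y, x ≠ y ∧ {x, y} ∈ p.parts := by
  obtain ⟨q, hq, hxq⟩ := p.parts_cover x
  rcases p.parts_card q hq with h_one | h_two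
  · obtain ⟨a, rfl⟩ := Set.ncard_eq_one.mp h_one
    rw [Set.mem_singleton_iff] at hxq
    exact absurd (hxq ▸ hq) hx
  · obtain ⟨a, b, hab, rfl⟩ := Set.ncard_eq_two.mp h_two
    rcases hxq with rfl | rfl
    · exact ⟨b, hab, hq⟩
    · exact ⟨a, hab.symm, Set.pair_comm a x ▸ hq⟩

/-- An arc `{i, j}` of the link state, oriented from `i` to `j`, such that no defect (singleton
part) lies underneath it, that is, in the open cyclic interval `(i, j)`. Orienting an arc amounts
to choosing which of its two sides counts as underneath. -/
structure IsDefectFreeArc (i j : ZMod n) : Prop where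
  ne : i ≠ j
  mem_parts : {i, j} ∈ p.parts
  singleton_notMem : ∀ x ∈ cycInt n i j, {x} ∉ p.parts

variable [NeZero n] {p}

theorem mem_cycInt_of_pair_mem_parts (hij : i ≠ j) (h_arc : {i, j} ∈ p.parts)
    (hxy : {x, y} ∈ p.parts) (hx : x ∈ cycInt n i j) : y ∈ cycInt n i j := by
  have hx_end : x ∉ ({i, j} : Set (ZMod n)) := by
    rintro (rfl | rfl)
    exacts [left_notMem_cycInt hx, right_notMem_cycInt hx]
  have hy_end : y ∉ ({i, j} : Set (ZMod n)) := fun hy ↦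
    hx_end (p.eq_of_mem_of_mem hxy h_arc (Set.mem_insert_of_mem x rfl) hy ▸ Set.mem_insert x {y})
  obtain rfl | h_ne := eq_or_ne x y
  · exact hx
  · rw [Set.mem_insert_iff, Set.mem_singleton_iff, not_or] at hy_end
    refine (mem_cycInt_or_mem_cycInt_swap hij hy_end.1 hy_end.2).resolve_right fun hy ↦ ?_
    exact p.noncrossing i j hij h_arc _ hxy (Set.ncard_pair h_ne)
      ⟨x, Set.mem_insert x {y}, y, Set.mem_insert_of_mem x rfl, hx, hy⟩

theorem isDefectFreeArc_of_defects_subset (hij : i ≠ j) (h_arc : {i, j} ∈ p.parts)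
    (h : ∀ q ∈ p.parts, q.ncard = 1 → q ⊆ cycInt n j i) : p.IsDefectFreeArc i j where
  ne := hij
  mem_parts := h_arc
  singleton_notMem x hx hx_part :=
    Set.disjoint_left.mp disjoint_cycInt_swap hx (h _ hx_part (Set.ncard_singleton x) rfl)

theorem exists_isDefectFreeArc (h : ∃ q ∈ p.parts, q.ncard = 2) :
    ∃ i j, p.IsDefectFreeArc i j := by
  obtain ⟨q, hq, hq_card⟩ := h
  obtain ⟨i, j, hij, rfl⟩ := Set.ncard_eq_two.mp hq_card
  rcases p.defects_one_side i j hij hq with h_ij | h_ji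
  · exact ⟨j, i, isDefectFreeArc_of_defects_subset hij.symm (Set.pair_comm i j ▸ hq) h_ij⟩
  · exact ⟨i, j, isDefectFreeArc_of_defects_subset hij hq h_ji⟩

theorem IsDefectFreeArc.exists_shorter (h : p.IsDefectFreeArc i j) (hj : j ≠ i + 1) :
    ∃ k l, p.IsDefectFreeArc k l ∧ (l - k).val < (j - i).val := by
  have h_mem : i + 1 ∈ cycInt n i j := add_one_mem_cycInt h.ne.symm hj
  obtain ⟨y, hy_ne, hy_part⟩ := p.exists_pair_mem_parts (h.singleton_notMem _ h_mem)
  have hy : y ∈ cycInt n i j := mem_cycInt_of_pair_mem_parts h.ne h.mem_parts hy_part h_mem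
  obtain ⟨hy_pos, hy_lt⟩ := mem_cycInt_iff.mp hy
  have h_le : (i + 1 - i).val ≤ (y - i).val := by
    rw [add_sub_cancel_left, ZMod.val_one_eq_one_mod]
    exact (Nat.mod_le 1 n).trans hy_pos
  have h_sub : cycInt n (i + 1) y ⊆ cycInt n i j := cycInt_subset_cycInt hy h_le
  refine ⟨i + 1, y, ⟨hy_ne, hy_part, fun x hx ↦ h.singleton_notMem x (h_sub hx)⟩, ?_⟩
  calc (y - (i + 1)).val = (y - i).val - (i + 1 - i).val := val_sub_of_val_sub_le h_le
    _ ≤ (y - i).val := Nat.sub_le _ _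
    _ < (j - i).val := hy_lt

end AnnularLinkState

/-- an annular link state on `ZMod n` having at least one part of
cardinality 2 has a part of the form `{k, k+1}`. -/
theorem stmt13 (n : ℕ) (hn : 1 ≤ n) (p : AnnularLinkState n)
    (h : ∃ q ∈ p.parts, q.ncard = 2) :
    ∃ k : ZMod n, {k, k + 1} ∈ p.parts := by
  have : NeZero n := ⟨Nat.one_le_iff_ne_zero.mp hn⟩
  obtain ⟨i₀, j₀, h₀⟩ := AnnularLinkState.exists_isDefectFreeArc h
  obtain ⟨⟨i, j⟩, h_arc, h_min⟩ := exists_minimalFor_of_wellFoundedLT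
    (fun e : ZMod n × ZMod n ↦ p.IsDefectFreeArc e.1 e.2) (fun e ↦ (e.2 - e.1).val)
    ⟨(i₀, j₀), h₀⟩
  obtain rfl | hj := eq_or_ne j (i + 1)
  · exact ⟨i, h_arc.mem_parts⟩
  · obtain ⟨k, l, h_kl, h_lt⟩ := h_arc.exists_shorter hj
    exact absurd (h_min (j := (k, l)) h_kl h_lt.le) h_lt.not_ge
end
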